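/- Under the hypotheses listed in the context, suppose in addition there exist λ̲ > 0 and τ > 0 with λ̲ ≤ λ_k ≤ 1/α_k − τ for all k. Then ‖x_k − J_k(x_k − γ_k·U_k(B x_k))‖ → 0 as k → ∞. -/

import Mathlib

open RealInnerProductSpace Filter

/-!
Measure the distance of `x k` to a zero `z` of `A + B` in the norm `√⟪(U k)⁻¹ v, v⟫`. Monotonicity
of `A` together with cocoercivity of `B` shows that an exact relaxed forward-backward step decreases
the square of this distance by at least a multiple of the squared residual. Inversion reverses the
order of positive operators, so passing from the norm of step `k` to that of step `k + 1` costs only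
a factor `1 + η k`. As `∑ η k` and the errors are summable, a discrete Grönwall argument makes the
squared residuals summable.
-/

section Sequences

theorem summable_of_add_le_one_add_mul_add {D δ ζ ω : ℕ → ℝ} (hD : ∀ k, 0 ≤ D k)
    (hδ : ∀ k, 0 ≤ δ k) (hζ : ∀ k, 0 ≤ ζ k) (hω : ∀ k, 0 ≤ ω k)
    (hζsum : Summable ζ) (hωsum : Summable ω)
    (hstep : ∀ k, D (k + 1) + δ k ≤ (1 + ζ k) * D k + ω k) : Summable δ := by
  -- Grönwall is applied to `D` plus the decrements collected so far.
  let E : ℕ → ℝ := fun n => D n + ∑ i ∈ Finset.range n, δ i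
  have hE0 : 0 ≤ E 0 := by simpa [E] using hD 0
  have hEstep (n : ℕ) : E (n + 1) ≤ (1 + ζ n) * E n + ω n := by
    have hcross : 0 ≤ ζ n * ∑ i ∈ Finset.range n, δ i :=
      mul_nonneg (hζ n) (Finset.sum_nonneg fun i _ => hδ i)
    simp only [E, Finset.sum_range_succ]
    linarith [hstep n]
  refine summable_of_sum_range_le (c := (E 0 + ∑' i, ω i) * Real.exp (∑' i, ζ i)) hδ fun n => ?_
  calc ∑ i ∈ Finset.range n, δ i
      ≤ E n := le_add_of_nonneg_left (hD n)
    _ ≤ (E 0 + ∑ i ∈ Finset.Ico 0 n, ω i) * Real.exp (∑ i ∈ Finset.Ico 0 n, ζ i) :=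
        discrete_gronwall hE0 (fun k _ => hEstep k) (fun k _ => hζ k) (fun k _ => hω k) n.zero_le
    _ ≤ (E 0 + ∑' i, ω i) * Real.exp (∑' i, ζ i) := by
        have hωtsum : 0 ≤ ∑' i, ω i := tsum_nonneg hω
        gcongr
        · exact hωsum.sum_le_tsum _ fun i _ => hω i
        · exact hζsum.sum_le_tsum _ fun i _ => hζ i

theorem summable_mul_of_nonneg {ι : Type*} {f g : ι → ℝ} (hf : Summable f) (hg : Summable g)
    (hf0 : ∀ k, 0 ≤ f k) (hg0 : ∀ k, 0 ≤ g k) : Summable fun k => f k * g k :=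
  (hf.mul_of_nonneg hg hf0 hg0).comp_injective (i := fun k => (k, k))
    fun _ _ h => congrArg Prod.fst h

theorem summable_of_seminorm_sq_descent {E : Type*} [AddCommGroup E] [Module ℝ E]
    {p : ℕ → Seminorm ℝ E} {x y : ℕ → E} {z : E} {η δ : ℕ → ℝ}
    (hη0 : ∀ k, 0 ≤ η k) (hη : Summable η) (hδ0 : ∀ k, 0 ≤ δ k)
    (hp : ∀ k v, p (k + 1) v ^ 2 ≤ (1 + η k) * p k v ^ 2)
    (hdescent : ∀ k, p k (y k - z) ^ 2 + δ k ≤ p k (x k - z) ^ 2)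
    (herror : Summable fun k => p k (x (k + 1) - y k)) : Summable δ := by
  set ε : ℕ → ℝ := fun k => p k (x (k + 1) - y k)
  have hε0 (k : ℕ) : 0 ≤ ε k := apply_nonneg _ _
  let ζ : ℕ → ℝ := fun k => η k + ε k + η k * ε k
  have hζ0 (k : ℕ) : 0 ≤ ζ k := by have := hη0 k; have := hε0 k; positivity
  have hζ : Summable ζ := (hη.add herror).add (summable_mul_of_nonneg hη herror hη0 hε0)
  refine summable_of_add_le_one_add_mul_add (D := fun k => p k (x k - z) ^ 2) (ζ := ζ)
    (ω := fun k => ε k + ζ k * ε k) (fun k => sq_nonneg _) hδ0 hζ0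
    (fun k => add_nonneg (hε0 k) (mul_nonneg (hζ0 k) (hε0 k))) hζ
    (herror.add (summable_mul_of_nonneg hζ herror hζ0 hε0)) fun k => ?_
  have hη1 : 0 ≤ 1 + η k := by linarith [hη0 k]
  have htriangle : p k (x (k + 1) - z) ≤ p k (y k - z) + ε k := by
    rw [← sub_add_sub_cancel (x (k + 1)) (y k) z, add_comm (p k (y k - z))]
    exact map_add_le_add (p k) _ _
  have hnext : p (k + 1) (x (k + 1) - z) ^ 2
      ≤ (1 + η k) * ((1 + ε k) * (p k (x k - z) ^ 2 - δ k) + ε k * (1 + ε k)) := by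
    calc p (k + 1) (x (k + 1) - z) ^ 2
        ≤ (1 + η k) * p k (x (k + 1) - z) ^ 2 := hp k _
      _ ≤ (1 + η k) * (p k (y k - z) + ε k) ^ 2 := by gcongr
      _ ≤ (1 + η k) * ((1 + ε k) * p k (y k - z) ^ 2 + ε k * (1 + ε k)) := by
          gcongr
          nlinarith [mul_nonneg (hε0 k) (sq_nonneg (p k (y k - z) - 1))]
      _ ≤ (1 + η k) * ((1 + ε k) * (p k (x k - z) ^ 2 - δ k) + ε k * (1 + ε k)) := by
          have := hε0 k
          gcongr
          linarith [hdescent k]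
  have hζδ : 0 ≤ ζ k * δ k := mul_nonneg (hζ0 k) (hδ0 k)
  simp only [ζ] at hζδ ⊢
  linarith

end Sequences

section EnergySeminorm

variable {H : Type*} [NormedAddCommGroup H] [InnerProductSpace ℝ H] {T : H →ₗ[ℝ] H}

theorem inner_map_sq_le_of_isPositive (hT : T.IsPositive) (x y : H) :
    ⟪T x, y⟫ ^ 2 ≤ ⟪T x, x⟫ * ⟪T y, y⟫ := by
  refine LinearMap.BilinForm.apply_sq_le_of_symm (innerₗ H ∘ₗ T) hT.inner_nonneg_left ⟨?_⟩ x y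
  exact fun x y => (hT.isSymmetric x y).trans (real_inner_comm _ _)

theorem inner_map_le_sqrt_mul_sqrt (hT : T.IsPositive) (x y : H) :
    ⟪T x, y⟫ ≤ √⟪T x, x⟫ * √⟪T y, y⟫ := by
  rw [← Real.sqrt_mul (hT.inner_nonneg_left x)]
  exact Real.le_sqrt_of_sq_le (inner_map_sq_le_of_isPositive hT x y)

theorem inner_map_add_smul_self (hT : T.IsSymmetric) (x y : H) (t : ℝ) :
    ⟪T (x + t • y), x + t • y⟫ = ⟪T x, x⟫ + 2 * t * ⟪T x, y⟫ + t ^ 2 * ⟪T y, y⟫ := by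
  have hcomm : ⟪T y, x⟫ = ⟪T x, y⟫ := (hT y x).trans (real_inner_comm _ _)
  simp only [map_add, map_smul, inner_add_left, inner_add_right, real_inner_smul_left,
    real_inner_smul_right, hcomm]
  ring

/-- The seminorm `x ↦ √⟪T x, x⟫` of a positive operator `T`. -/
noncomputable def energySeminorm (hT : T.IsPositive) : Seminorm ℝ H :=
  Seminorm.of (fun x => √⟪T x, x⟫)
    (fun x y => by
      have hexpand := inner_map_add_smul_self hT.isSymmetric x y 1
      rw [one_smul] at hexpand
      refine Real.sqrt_le_iff.2 ⟨by positivity, ?_⟩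
      rw [hexpand, add_sq, Real.sq_sqrt (hT.inner_nonneg_left x),
        Real.sq_sqrt (hT.inner_nonneg_left y)]
      linarith [inner_map_le_sqrt_mul_sqrt hT x y])
    (fun c x => by
      rw [map_smul, real_inner_smul_left, real_inner_smul_right, ← mul_assoc,
        Real.sqrt_mul (mul_self_nonneg c), Real.sqrt_mul_self_eq_abs, Real.norm_eq_abs])

theorem energySeminorm_sq (hT : T.IsPositive) (x : H) : energySeminorm hT x ^ 2 = ⟪T x, x⟫ :=
  Real.sq_sqrt (hT.inner_nonneg_left x)

theorem inner_map_le_energySeminorm_mul (hT : T.IsPositive) (x y : H) :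
    ⟪T x, y⟫ ≤ energySeminorm hT x * energySeminorm hT y :=
  inner_map_le_sqrt_mul_sqrt hT x y

end EnergySeminorm

section OperatorComparison

variable {H : Type*} [NormedAddCommGroup H] [InnerProductSpace ℝ H]
  {U U' : H ≃ₗ[ℝ] H} {c : ℝ}

theorem inner_map_self_le_opNorm_mul (T : H →L[ℝ] H) (x : H) : ⟪T x, x⟫ ≤ ‖T‖ * ‖x‖ ^ 2 := by
  calc ⟪T x, x⟫ ≤ ‖T x‖ * ‖x‖ := real_inner_le_norm _ _
    _ ≤ ‖T‖ * ‖x‖ * ‖x‖ := by gcongr; exact T.le_opNorm x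
    _ = ‖T‖ * ‖x‖ ^ 2 := by ring

-- Cauchy–Schwarz for the form `⟪U ·, ·⟫` at the two preimages of `x`.
theorem inner_symm_le_of_inner_le (hU : (U : H →ₗ[ℝ] H).IsPositive) (hc : 0 ≤ c)
    (hle : ∀ v, ⟪U v, v⟫ ≤ c * ⟪U' v, v⟫) (x : H) :
    ⟪U'.symm x, x⟫ ≤ c * ⟪U.symm x, x⟫ := by
  have hnonneg : 0 ≤ ⟪U.symm x, x⟫ := hU.toLinearMap_symm.inner_nonneg_left x
  have hsq : ⟪U'.symm x, x⟫ ^ 2 ≤ c * ⟪U.symm x, x⟫ * ⟪U'.symm x, x⟫ := by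
    calc ⟪U'.symm x, x⟫ ^ 2
        = ⟪U (U.symm x), U'.symm x⟫ ^ 2 := by rw [U.apply_symm_apply, real_inner_comm]
      _ ≤ ⟪U (U.symm x), U.symm x⟫ * ⟪U (U'.symm x), U'.symm x⟫ :=
          inner_map_sq_le_of_isPositive hU _ _
      _ ≤ ⟪U (U.symm x), U.symm x⟫ * (c * ⟪U' (U'.symm x), U'.symm x⟫) := by
          gcongr
          · exact hU.inner_nonneg_left _
          · exact hle _
      _ = c * ⟪U.symm x, x⟫ * ⟪U'.symm x, x⟫ := by
          rw [U.apply_symm_apply, U'.apply_symm_apply, real_inner_comm x (U.symm x),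
            real_inner_comm x (U'.symm x)]
          ring
  rcases le_or_gt ⟪U'.symm x, x⟫ 0 with hnonpos | hpos
  · exact hnonpos.trans (mul_nonneg hc hnonneg)
  · exact le_of_mul_le_mul_right (by rwa [← sq]) hpos

theorem norm_sq_le_mul_inner_symm (hU : (U : H →ₗ[ℝ] H).IsPositive) (hc : 0 ≤ c)
    (hle : ∀ v, ⟪U v, v⟫ ≤ c * ‖v‖ ^ 2) (x : H) : ‖x‖ ^ 2 ≤ c * ⟪U.symm x, x⟫ := by
  simp only [← real_inner_self_eq_norm_sq] at hle ⊢
  exact inner_symm_le_of_inner_le (U' := .refl ℝ H) hU hc hle x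

theorem inner_symm_le_mul_norm_sq {α : ℝ} (hα : 0 < α) (hge : ∀ v, α * ‖v‖ ^ 2 ≤ ⟪U v, v⟫)
    (x : H) : ⟪U.symm x, x⟫ ≤ α⁻¹ * ‖x‖ ^ 2 := by
  simp only [← real_inner_self_eq_norm_sq] at hge ⊢
  exact inner_symm_le_of_inner_le (U := .refl ℝ H) LinearMap.isPositive_id (inv_nonneg.2 hα.le)
    (fun v => (le_inv_mul_iff₀ hα).2 (hge v)) x

theorem energySeminorm_symm_le {α : ℝ} (hα : 0 < α) (hge : ∀ v, α * ‖v‖ ^ 2 ≤ ⟪U v, v⟫)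
    (hV : (U.symm : H →ₗ[ℝ] H).IsPositive) (x : H) : energySeminorm hV x ≤ √α⁻¹ * ‖x‖ := by
  rw [← Real.sqrt_sq (norm_nonneg x), ← Real.sqrt_mul (inv_nonneg.2 hα.le)]
  exact Real.sqrt_le_sqrt (inner_symm_le_mul_norm_sq hα hge x)

end OperatorComparison

section ForwardBackward

variable {H : Type*} [NormedAddCommGroup H] [InnerProductSpace ℝ H]

/-- Monotonicity of a set-valued operator, given by its values `A x`. -/
def IsMonotoneOperator (A : H → Set H) : Prop :=
  ∀ x y u v : H, u ∈ A x → v ∈ A y → 0 ≤ ⟪x - y, u - v⟫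

/-- `β`-cocoercivity of a single-valued operator. -/
def IsCocoercive (β : ℝ) (B : H → H) : Prop :=
  ∀ x y : H, β * ‖B x - B y‖ ^ 2 ≤ ⟪x - y, B x - B y⟫

/-- `J` is the resolvent `(id + γ U A)⁻¹` of `γ U A`. The inclusion `y - J y ∈ γ U A (J y)` is
solved for the element of `A (J y)`, so that monotonicity of `A` applies to it directly. -/
def IsResolvent (A : H → Set H) (U : H ≃ₗ[ℝ] H) (γ : ℝ) (J : H → H) : Prop :=
  ∀ y : H, (1 / γ) • U.symm (y - J y) ∈ A (J y)

/-- The fixed-point residual of the forward-backward map `x ↦ J (x - γ U (B x))`. -/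
def fbResidual (B : H → H) (U : H ≃ₗ[ℝ] H) (γ : ℝ) (J : H → H) (x : H) : H :=
  x - J (x - γ • U (B x))

variable {A : H → Set H} {B J : H → H} {U : H ≃ₗ[ℝ] H} {β γ ν : ℝ}

theorem energySeminorm_resolvent_sub_le (hA : IsMonotoneOperator A) (hγ : 0 < γ)
    (hV : (U.symm : H →ₗ[ℝ] H).IsPositive) (hJ : IsResolvent A U γ J) (y y' : H) :
    energySeminorm hV (J y - J y') ≤ energySeminorm hV (y - y') := by
  have hmono : 0 ≤ ⟪U.symm (y - J y) - U.symm (y' - J y'), J y - J y'⟫ := by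
    have hscaled := hA _ _ _ _ (hJ y) (hJ y')
    rw [← smul_sub, real_inner_smul_right, real_inner_comm] at hscaled
    exact nonneg_of_mul_nonneg_right hscaled (one_div_pos.2 hγ)
  have hfirm : ⟪U.symm (J y - J y'), J y - J y'⟫ ≤ ⟪U.symm (y - y'), J y - J y'⟫ := by
    rw [← map_sub, sub_sub_sub_comm, map_sub, inner_sub_left] at hmono
    linarith
  have hsq : energySeminorm hV (J y - J y') * energySeminorm hV (J y - J y')
      ≤ energySeminorm hV (y - y') * energySeminorm hV (J y - J y') := by
    rw [← sq, energySeminorm_sq]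
    exact hfirm.trans (inner_map_le_energySeminorm_mul hV _ _)
  rcases (apply_nonneg (energySeminorm hV) (J y - J y')).eq_or_lt with hzero | hpos
  · exact hzero.symm.trans_le (apply_nonneg _ _)
  · exact le_of_mul_le_mul_right hsq hpos

theorem IsCocoercive.inner_sub_le_norm_sq_div (hB : IsCocoercive β B) (hβ : 0 < β) (x y r : H) :
    ⟪r - (x - y), B x - B y⟫ ≤ ‖r‖ ^ 2 / (4 * β) := by
  have hyoung : ‖r‖ * ‖B x - B y‖ ≤ β * ‖B x - B y‖ ^ 2 + ‖r‖ ^ 2 / (4 * β) := by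
    rw [← sub_nonneg]
    calc 0 ≤ (2 * β * ‖B x - B y‖ - ‖r‖) ^ 2 / (4 * β) := by positivity
      _ = β * ‖B x - B y‖ ^ 2 + ‖r‖ ^ 2 / (4 * β) - ‖r‖ * ‖B x - B y‖ := by field_simp; ring
  rw [inner_sub_left]
  linarith [hB x y, real_inner_le_norm r (B x - B y)]

theorem inner_symm_fbResidual_ge (hA : IsMonotoneOperator A) (hB : IsCocoercive β B) (hβ : 0 < β)
    (hγ : 0 < γ) (hV : (U.symm : H →ₗ[ℝ] H).IsSymmetric)
    (hν : ∀ v, ‖v‖ ^ 2 ≤ ν * ⟪U.symm v, v⟫) (hJ : IsResolvent A U γ J) {z : H} (hz : -B z ∈ A z)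
    (x : H) :
    (4 * β - γ * ν) / (2 * β) * ⟪U.symm (fbResidual B U γ J x), fbResidual B U γ J x⟫
      ≤ 2 * ⟪U.symm (x - z), fbResidual B U γ J x⟫ := by
  set r := fbResidual B U γ J x with hr
  have hJr : J (x - γ • U (B x)) = x - r := by rw [hr, fbResidual, sub_sub_cancel]
  have hmem : (1 / γ) • U.symm r - B x ∈ A (x - r) := by
    have harg : x - γ • U (B x) - (x - r) = r - γ • U (B x) := by abel
    have hmem := hJ (x - γ • U (B x))
    rwa [hJr, harg, map_sub, map_smul, U.symm_apply_apply, smul_sub, smul_smul,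
      one_div_mul_cancel hγ.ne', one_smul] at hmem
  have hmono : 0 ≤ 1 / γ * (⟪U.symm (x - z), r⟫ - ⟪U.symm r, r⟫) + ⟪r - (x - z), B x - B z⟫ := by
    have hsymm : ⟪x - z, U.symm r⟫ = ⟪U.symm (x - z), r⟫ := (hV (x - z) r).symm
    have hmono := hA _ _ _ _ hmem hz
    rw [sub_neg_eq_add, sub_add, inner_sub_right, real_inner_smul_right, sub_right_comm,
      inner_sub_left (x - z) r (U.symm r), hsymm, real_inner_comm (U.symm r) r] at hmono
    rwa [← neg_sub (x - z) r, inner_neg_left, ← sub_eq_add_neg]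
  have hcoco : ⟪r - (x - z), B x - B z⟫ ≤ ν * ⟪U.symm r, r⟫ / (4 * β) :=
    (hB.inner_sub_le_norm_sq_div hβ x z r).trans (by gcongr; exact hν r)
  have hscaled : 0 ≤ 2 * γ * (1 / γ * (⟪U.symm (x - z), r⟫ - ⟪U.symm r, r⟫)
      + ν * ⟪U.symm r, r⟫ / (4 * β)) := mul_nonneg (by positivity) (by linarith)
  rw [← sub_nonneg]
  convert hscaled using 1
  field_simp
  ring

theorem energySeminorm_sub_smul_fbResidual_sq_le (hA : IsMonotoneOperator A)
    (hB : IsCocoercive β B) (hβ : 0 < β) (hγ : 0 < γ) (hV : (U.symm : H →ₗ[ℝ] H).IsPositive)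
    (hν : ∀ v, ‖v‖ ^ 2 ≤ ν * ⟪U.symm v, v⟫) (hJ : IsResolvent A U γ J) {z : H} (hz : -B z ∈ A z)
    {t : ℝ} (ht : 0 ≤ t) (x : H) :
    energySeminorm hV (x - t • fbResidual B U γ J x - z) ^ 2
        + t * ((4 * β - γ * ν) / (2 * β) - t) * energySeminorm hV (fbResidual B U γ J x) ^ 2
      ≤ energySeminorm hV (x - z) ^ 2 := by
  set r := fbResidual B U γ J x
  have hrearrange : x - t • r - z = x - z + (-t) • r := by module
  have hgain := mul_le_mul_of_nonneg_left
    (inner_symm_fbResidual_ge hA hB hβ hγ hV.isSymmetric hν hJ hz x) ht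
  rw [hrearrange, energySeminorm_sq, energySeminorm_sq, energySeminorm_sq,
    inner_map_add_smul_self hV.isSymmetric]
  simp only [LinearEquiv.coe_coe]
  linarith

theorem energySeminorm_inexact_step_sub_le {α : ℝ} (hα : 0 < α)
    (hge : ∀ v, α * ‖v‖ ^ 2 ≤ ⟪U v, v⟫) (hA : IsMonotoneOperator A) (hγ : 0 < γ)
    (hV : (U.symm : H →ₗ[ℝ] H).IsPositive) (hJ : IsResolvent A U γ J) {t : ℝ} (ht : 0 ≤ t)
    (x a b : H) :
    energySeminorm hV
        (x + t • (J (x - γ • U (B x + b)) + a - x) - (x - t • fbResidual B U γ J x))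
      ≤ t * (√α⁻¹ * ‖γ • U b‖ + √α⁻¹ * ‖a‖) := by
  have hsplit : x + t • (J (x - γ • U (B x + b)) + a - x) - (x - t • fbResidual B U γ J x)
      = t • (J (x - γ • U (B x + b)) - J (x - γ • U (B x)) + a) := by
    rw [fbResidual]; module
  have hinput : x - γ • U (B x + b) - (x - γ • U (B x)) = -(γ • U b) := by
    rw [map_add]; module
  have hforward : energySeminorm hV (J (x - γ • U (B x + b)) - J (x - γ • U (B x)))
      ≤ √α⁻¹ * ‖γ • U b‖ := by
    calc energySeminorm hV (J (x - γ • U (B x + b)) - J (x - γ • U (B x)))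
        ≤ energySeminorm hV (x - γ • U (B x + b) - (x - γ • U (B x))) :=
          energySeminorm_resolvent_sub_le hA hγ hV hJ _ _
      _ = energySeminorm hV (γ • U b) := by rw [hinput, map_neg_eq_map]
      _ ≤ √α⁻¹ * ‖γ • U b‖ := energySeminorm_symm_le hα hge hV _
  rw [hsplit, map_smul_eq_mul, Real.norm_of_nonneg ht]
  gcongr
  exact (map_add_le_add _ _ _).trans (add_le_add hforward (energySeminorm_symm_le hα hge hV a))

theorem summable_energySeminorm_inexact_step_sub {α c : ℝ} (hα : 0 < α)
    (hA : IsMonotoneOperator A) {U : ℕ → H ≃ₗ[ℝ] H} {J : ℕ → H → H} {γ lam : ℕ → ℝ}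
    (hge : ∀ k v, α * ‖v‖ ^ 2 ≤ ⟪U k v, v⟫) (hγ : ∀ k, 0 < γ k)
    (hγU : ∀ k v, ‖γ k • U k v‖ ≤ c * ‖v‖) (hV : ∀ k, ((U k).symm : H →ₗ[ℝ] H).IsPositive)
    (hJ : ∀ k, IsResolvent A (U k) (γ k) (J k)) (hlam : ∀ k, 0 ≤ lam k) {a b : ℕ → H}
    (ha : Summable fun k => lam k * ‖a k‖) (hb : Summable fun k => lam k * ‖b k‖) (x : ℕ → H) :
    Summable fun k => energySeminorm (hV k)
      (x k + lam k • (J k (x k - γ k • U k (B (x k) + b k)) + a k - x k)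
        - (x k - lam k • fbResidual B (U k) (γ k) (J k) (x k))) := by
  refine .of_nonneg_of_le (fun k => apply_nonneg _ _) (fun k => ?_)
    ((hb.mul_left (√α⁻¹ * c)).add (ha.mul_left √α⁻¹))
  have hlamk := hlam k
  calc _ ≤ lam k * (√α⁻¹ * ‖γ k • U k (b k)‖ + √α⁻¹ * ‖a k‖) :=
        energySeminorm_inexact_step_sub_le hα (hge k) hA (hγ k) _ (hJ k) hlamk _ _ _
    _ ≤ lam k * (√α⁻¹ * (c * ‖b k‖) + √α⁻¹ * ‖a k‖) := by gcongr; exact hγU k (b k)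
    _ = √α⁻¹ * c * (lam k * ‖b k‖) + √α⁻¹ * (lam k * ‖a k‖) := by ring

theorem summable_energySeminorm_fbResidual_sq (hA : IsMonotoneOperator A) (hB : IsCocoercive β B)
    (hβ : 0 < β) {z : H} (hz : -B z ∈ A z) {U : ℕ → H ≃ₗ[ℝ] H} {J : ℕ → H → H}
    {γ ν η lam : ℕ → ℝ} (hγ : ∀ k, 0 < γ k) (hU : ∀ k, (U k : H →ₗ[ℝ] H).IsPositive)
    (hν : ∀ k v, ‖v‖ ^ 2 ≤ ν k * ⟪(U k).symm v, v⟫) (hη0 : ∀ k, 0 ≤ η k) (hη : Summable η)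
    (hUmono : ∀ k v, ⟪U k v, v⟫ ≤ (1 + η k) * ⟪U (k + 1) v, v⟫)
    (hJ : ∀ k, IsResolvent A (U k) (γ k) (J k)) {lamlb τ : ℝ} (hlamlb : 0 < lamlb) (hτ : 0 < τ)
    (hlam : ∀ k, lamlb ≤ lam k ∧ lam k ≤ (4 * β - γ k * ν k) / (2 * β) - τ) {x : ℕ → H}
    (herror : Summable fun k => energySeminorm (hU k).toLinearMap_symm
      (x (k + 1) - (x k - lam k • fbResidual B (U k) (γ k) (J k) (x k)))) :
    Summable fun k =>
      energySeminorm (hU k).toLinearMap_symm (fbResidual B (U k) (γ k) (J k) (x k)) ^ 2 := by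
  have hlam0 (k : ℕ) : 0 ≤ lam k := hlamlb.le.trans (hlam k).1
  refine (summable_mul_left_iff (mul_pos hlamlb hτ).ne').1
    (summable_of_seminorm_sq_descent hη0 hη (fun k => by positivity) (fun k v => ?_)
      (fun k => ?_) herror (z := z))
  · simp only [energySeminorm_sq]
    exact inner_symm_le_of_inner_le (hU k) (by linarith [hη0 k]) (hUmono k) v
  · refine le_trans ?_ (energySeminorm_sub_smul_fbResidual_sq_le hA hB hβ (hγ k) _ (hν k) (hJ k)
      hz (hlam0 k) (x k))
    gcongr
    · exact hlam0 k
    · exact (hlam k).1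
    · linarith [(hlam k).2]

theorem fb_residual_tendsto_zero_general
    {β : ℝ} (hβ : 0 < β) {B : H → H} (hB : IsCocoercive β B)
    {A : H → Set H} (hA : IsMonotoneOperator A) (hΩ : {z : H | ∃ u ∈ A z, u + B z = 0}.Nonempty)
    {α μ : ℝ} (hα : 0 < α) {U : ℕ → H ≃L[ℝ] H}
    (hU : ∀ k, ((U k : H →L[ℝ] H) : H →ₗ[ℝ] H).IsSymmetric)
    (hUpos : ∀ k v, α * ‖v‖ ^ 2 ≤ ⟪U k v, v⟫) (hUnorm : ∀ k, ‖(U k : H →L[ℝ] H)‖ ≤ μ)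
    {η : ℕ → ℝ} (hη0 : ∀ k, 0 ≤ η k) (hη : Summable η)
    (hUmono : ∀ k v, ⟪U k v, v⟫ ≤ (1 + η k) * ⟪U (k + 1) v, v⟫)
    {γ lam : ℕ → ℝ} (hγ : ∀ k, 0 < γ k) {a b : ℕ → H}
    (ha : Summable fun k => lam k * ‖a k‖) (hb : Summable fun k => lam k * ‖b k‖)
    {J : ℕ → H → H} (hJ : ∀ k, IsResolvent A (U k).toLinearEquiv (γ k) (J k))
    {x : ℕ → H}
    (hx : ∀ k, x (k + 1) =
      x k + lam k • (J k (x k - γ k • U k (B (x k) + b k)) + a k - x k))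
    {lamlb τ : ℝ} (hlamlb : 0 < lamlb) (hτ : 0 < τ)
    (hlam : ∀ k, lamlb ≤ lam k ∧
      lam k ≤ (4 * β - γ k * ‖(U k : H →L[ℝ] H)‖) / (2 * β) - τ) :
    Tendsto (fun k => ‖fbResidual B (U k).toLinearEquiv (γ k) (J k) (x k)‖) atTop (nhds 0) := by
  obtain ⟨z, u, hu, huz⟩ := hΩ
  have hz : -B z ∈ A z := eq_neg_of_add_eq_zero_left huz ▸ hu
  have hUposit (k : ℕ) : ((U k).toLinearEquiv : H →ₗ[ℝ] H).IsPositive :=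
    ⟨hU k, fun v => (by positivity : 0 ≤ α * ‖v‖ ^ 2).trans (hUpos k v)⟩
  have hnorm (k : ℕ) : ∀ v, ‖v‖ ^ 2 ≤ ‖(U k : H →L[ℝ] H)‖ * ⟪(U k).symm v, v⟫ :=
    norm_sq_le_mul_inner_symm (hUposit k) (norm_nonneg _)
      (inner_map_self_le_opNorm_mul (U k : H →L[ℝ] H))
  have hstepsize (k : ℕ) : γ k * ‖(U k : H →L[ℝ] H)‖ ≤ 4 * β := by
    have hquot : 0 < (4 * β - γ k * ‖(U k : H →L[ℝ] H)‖) / (2 * β) := by linarith [hlam k]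
    exact sub_nonneg.1 ((div_pos_iff_of_pos_right (by positivity)).1 hquot).le
  have hγU (k : ℕ) (v : H) : ‖γ k • U k v‖ ≤ 4 * β * ‖v‖ := by
    calc ‖γ k • U k v‖ = γ k * ‖U k v‖ := norm_smul_of_nonneg (hγ k).le _
      _ ≤ γ k * (‖(U k : H →L[ℝ] H)‖ * ‖v‖) :=
          mul_le_mul_of_nonneg_left ((U k : H →L[ℝ] H).le_opNorm v) (hγ k).le
      _ = γ k * ‖(U k : H →L[ℝ] H)‖ * ‖v‖ := (mul_assoc _ _ _).symm
      _ ≤ 4 * β * ‖v‖ := mul_le_mul_of_nonneg_right (hstepsize k) (norm_nonneg v)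
  have herror := summable_energySeminorm_inexact_step_sub (B := B) hα hA hUpos hγ hγU
    (fun k => (hUposit k).toLinearMap_symm) hJ (fun k => hlamlb.le.trans (hlam k).1) ha hb x
  have hsummable := summable_energySeminorm_fbResidual_sq hA hB hβ hz hγ hUposit hnorm hη0 hη
    hUmono hJ hlamlb hτ hlam (x := x) (by simp only [hx]; exact herror)
  have hsq : Tendsto (fun k => ‖fbResidual B (U k).toLinearEquiv (γ k) (J k) (x k)‖ ^ 2) atTop
      (nhds 0) := by
    refine (Summable.of_nonneg_of_le (fun k => sq_nonneg _) (fun k => ?_)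
      (hsummable.mul_left μ)).tendsto_atTop_zero
    rw [energySeminorm_sq]
    exact (hnorm k _).trans
      (mul_le_mul_of_nonneg_right (hUnorm k) ((hUposit k).toLinearMap_symm.inner_nonneg_left _))
  simpa [Real.sqrt_sq] using hsq.sqrt

end ForwardBackward

theorem fb_residual_tendsto_zero
    {H : Type*} [NormedAddCommGroup H] [InnerProductSpace ℝ H] [CompleteSpace H]
    (β : ℝ) (hβ : 0 < β) (B : H → H)
    (hB : ∀ x y : H, ⟪x - y, B x - B y⟫ ≥ β * ‖B x - B y‖ ^ 2)
    (A : H → Set H)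
    (hAmono : ∀ x y u v : H, u ∈ A x → v ∈ A y → ⟪x - y, u - v⟫ ≥ 0)
    (hAmax : ∀ z w : H, (∀ x : H, ∀ u ∈ A x, ⟪x - z, u - w⟫ ≥ 0) → w ∈ A z)
    (hΩ : {z : H | ∃ u ∈ A z, u + B z = 0}.Nonempty)
    (α : ℝ) (hα : 0 < α) (μ : ℝ) (hμ : 0 < μ)
    (U V : ℕ → H →L[ℝ] H)
    (hU : ∀ k, IsSelfAdjoint (U k))
    (hUpos : ∀ k, ∀ x : H, ⟪U k x, x⟫ ≥ α * ‖x‖ ^ 2)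
    (hV : ∀ k, IsSelfAdjoint (V k))
    (hVU : ∀ k, (V k).comp (U k) = ContinuousLinearMap.id ℝ H)
    (hUV : ∀ k, (U k).comp (V k) = ContinuousLinearMap.id ℝ H)
    (hUnorm : ∀ k, ‖U k‖ ≤ μ)
    (η : ℕ → ℝ) (hη0 : ∀ k, 0 ≤ η k) (hηsum : Summable η)
    (hUmono : ∀ k, ∀ z : H, (1 + η k) * ⟪U (k + 1) z, z⟫ ≥ ⟪U k z, z⟫)
    (γ lam αk : ℕ → ℝ)
    (hγ : ∀ k, 0 < γ k ∧ γ k < 2 * β / ‖U k‖)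
    (hαk : ∀ k, αk k = 2 * β / (4 * β - γ k * ‖U k‖))
    (hlam : ∀ k, 0 < lam k ∧ lam k < 1 / αk k)
    (a b : ℕ → H)
    (ha : Summable (fun k => lam k * ‖a k‖))
    (hb : Summable (fun k => lam k * ‖b k‖))
    (J : ℕ → H → H)
    (hJ : ∀ k, ∀ y : H, (1 / γ k) • (V k (y - J k y)) ∈ A (J k y))
    (x : ℕ → H)
    (hx : ∀ k, x (k + 1) =
      x k + lam k • (J k (x k - γ k • U k (B (x k) + b k)) + a k - x k))
    (lamlb τ : ℝ) (hlamlb : 0 < lamlb) (hτ : 0 < τ)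
    (hlam' : ∀ k, lamlb ≤ lam k ∧ lam k ≤ 1 / αk k - τ) :
    Tendsto (fun k => ‖x k - J k (x k - γ k • U k (B (x k)))‖) atTop (nhds 0) := by
  have hrelax : ∀ k, lamlb ≤ lam k ∧ lam k ≤ (4 * β - γ k * ‖U k‖) / (2 * β) - τ := by
    simpa only [hαk, one_div_div] using hlam'
  exact fb_residual_tendsto_zero_general hβ hB hAmono hΩ hα
    (U := fun k => .equivOfInverse' (U k) (V k) (hUV k) (hVU k)) (fun k => (hU k).isSymmetric)
    hUpos hUnorm hη0 hηsum hUmono (fun k => (hγ k).1) ha hb hJ hx hlamlb hτ hrelax
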